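/- In the unconditioned n-bit majority MDP, the optimal value at any state with all-zero control bits is V*((0_b, x)) = n + 1 − d(x, s_reward), i.e., n + 1 minus the number of indices i ∈ {1, …, n} with x_i ≠ (s_reward)_i. -/

import Mathlib

/-!
Write `n = 2^b − 1`, `c_k = f^[k] 0_b` and `d = d(x, s_reward)`.

Since `c_1, …, c_n` exhaust the `n` nonzero control strings, they are pairwise distinct; as `1_b` is
a fixed point of `f`, it cannot occur before `c_n`, so `c_n = 1_b` and `c_k ≠ 1_b` for `k < n`
(`iterate_eq_one_iff`).

Upper bound: every step either advances the control string or flips one bit, so reaching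
`(1_b, s_reward)` takes at least `n` advances and at least `d` flips. The reward state is thus
visited only at (0-indexed) times `t ≥ n + d`, which leaves `n + 1 − d` of the `2n + 1` time steps
(`le_time_of_reward`).

Lower bound: the greedy policy flips the currently addressed bit exactly when it disagrees with
`s_reward`. Along it every addressed bit is repaired before the control string advances, and
all bits get addressed because `bitVal` is onto `{0, …, n}`. No step is wasted, so the policy is
at the reward state from time `n + d` on (`greedy_reward`).
-/

/-- The all-false (all-zero) bit string of length `ℓ`. -/
def zeroStr (ℓ : ℕ) : Fin ℓ → Bool := fun _ => false

/-- The all-true (all-one) bit string of length `ℓ`. -/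
def oneStr (ℓ : ℕ) : Fin ℓ → Bool := fun _ => true

/-- `f` is a control function over `{0,1}^b`: it fixes the all-one string, and the
iterates `f^(k)(0_b)` for `k = 1, …, 2^b − 1` cover exactly `{0,1}^b ∖ {0_b}`. -/
def IsControlFunc (b : ℕ) (f : (Fin b → Bool) → (Fin b → Bool)) : Prop :=
  f (oneStr b) = oneStr b ∧
    (fun k => f^[k] (zeroStr b)) '' Set.Icc 1 (2 ^ b - 1) = {v | v ≠ zeroStr b}

/-- The value of a length-`b` bit string as a most-significant-bit-first binary number. -/
def bitVal {b : ℕ} (c : Fin b → Bool) : ℕ :=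
  ∑ j : Fin b, if c j then 2 ^ (b - 1 - (j : ℕ)) else 0

/-- The Hamming distance between two bit strings. -/
def hammDist {n : ℕ} (x y : Fin n → Bool) : ℕ :=
  (Finset.univ.filter fun i => x i ≠ y i).card

/-- The transition of the unconditioned `n`-bit majority MDP (`n = 2^b − 1`):
on action `1` with nonzero control bits, flip the `val(c)`-th (1-indexed)
representation bit; otherwise apply the control function to the control bits. -/
def majStep (b : ℕ) (f : (Fin b → Bool) → (Fin b → Bool))
    (s : (Fin b → Bool) × (Fin (2 ^ b - 1) → Bool)) (a : Bool) :
    (Fin b → Bool) × (Fin (2 ^ b - 1) → Bool) :=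
  if a = true ∧ s.1 ≠ zeroStr b then
    (s.1, fun i => if (i : ℕ) + 1 = bitVal s.1 then !(s.2 i) else s.2 i)
  else (f s.1, s.2)

/-- The trajectory induced by an action sequence `a`: `majTraj b f s a 0 = s` (this is
`s_1`) and `majTraj b f s a t` is the state `s_{t+1}`. -/
def majTraj (b : ℕ) (f : (Fin b → Bool) → (Fin b → Bool))
    (s : (Fin b → Bool) × (Fin (2 ^ b - 1) → Bool)) (a : ℕ → Bool) :
    ℕ → (Fin b → Bool) × (Fin (2 ^ b - 1) → Bool)
  | 0 => s
  | t + 1 => majStep b f (majTraj b f s a t) (a t)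

/-- The optimal value of the unconditioned majority MDP with horizon `H = 2^b + n`:
the maximal, over action sequences, number of time steps `t ∈ {1, …, H}` with
`s_t = (1_b, s_reward)`. -/
noncomputable def majV (b : ℕ) (f : (Fin b → Bool) → (Fin b → Bool))
    (sr : Fin (2 ^ b - 1) → Bool)
    (s : (Fin b → Bool) × (Fin (2 ^ b - 1) → Bool)) : ℕ :=
  sSup {v | ∃ a : ℕ → Bool,
    v = ((Finset.range (2 ^ b + (2 ^ b - 1))).filter
          fun t => majTraj b f s a t = (oneStr b, sr)).card}

theorem bitVal_surj (b m : ℕ) (hm : m < 2 ^ b) : ∃ c : Fin b → Bool, bitVal c = m := by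
  induction b generalizing m with
  | zero => exact ⟨fun _ => false, by simp [bitVal] at *; omega⟩
  | succ b ih =>
    have key : ∀ (h : Bool) (c : Fin b → Bool),
        bitVal (Fin.cons h c : Fin (b + 1) → Bool) = (if h then 2 ^ b else 0) + bitVal c := by
      intro h c
      simp only [bitVal, Fin.sum_univ_succ, Fin.cons_zero, Fin.cons_succ, Fin.val_zero,
        Fin.val_succ]
      congr 1
      refine Finset.sum_congr rfl fun j _ => ?_
      rw [show b + 1 - 1 - ((j : ℕ) + 1) = b - 1 - (j : ℕ) by omega]
    rw [pow_succ] at hm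
    by_cases h : m < 2 ^ b
    · obtain ⟨c, hc⟩ := ih m h
      exact ⟨Fin.cons false c, by rw [key, hc]; simp⟩
    · obtain ⟨c, hc⟩ := ih (m - 2 ^ b) (by omega)
      exact ⟨Fin.cons true c, by rw [key, hc]; simp; omega⟩

theorem bitVal_zeroStr (b : ℕ) : bitVal (zeroStr b) = 0 := by
  simp [bitVal, zeroStr]

theorem zeroStr_ne_oneStr {b : ℕ} (hb : 1 ≤ b) : zeroStr b ≠ oneStr b := by
  intro h
  have := congrFun h ⟨0, hb⟩
  simp [zeroStr, oneStr] at this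

theorem exists_iterate {b : ℕ} {f : (Fin b → Bool) → (Fin b → Bool)} (hf : IsControlFunc b f)
    {c : Fin b → Bool} (hc : c ≠ zeroStr b) : ∃ k ≤ 2 ^ b - 1, f^[k] (zeroStr b) = c := by
  have : c ∈ (fun k => f^[k] (zeroStr b)) '' Set.Icc 1 (2 ^ b - 1) := by
    rw [hf.2]; exact hc
  obtain ⟨k, hk, h⟩ := this
  exact ⟨k, hk.2, h⟩

theorem iterate_injOn {b : ℕ} {f : (Fin b → Bool) → (Fin b → Bool)} (hf : IsControlFunc b f) :
    Set.InjOn (fun k => f^[k] (zeroStr b)) (Finset.range (2 ^ b) : Set ℕ) := by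
  -- A surjection between finite sets of the same size `2^b` is injective.
  refine Finset.injOn_of_surjOn_of_card_le (t := Finset.univ) _ (fun _ _ => by simp) ?_ (by simp)
  intro c _
  have hp : 0 < 2 ^ b := by positivity
  by_cases hc : c = zeroStr b
  · exact ⟨0, by simp, by simp [hc]⟩
  · obtain ⟨k, hk, h⟩ := exists_iterate hf hc
    exact ⟨k, by simp; omega, h⟩

theorem iterate_eq_one_iff {b : ℕ} (hb : 1 ≤ b) {f : (Fin b → Bool) → (Fin b → Bool)}
    (hf : IsControlFunc b f) (k : ℕ) : f^[k] (zeroStr b) = oneStr b ↔ 2 ^ b - 1 ≤ k := by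
  have lower : ∀ k, f^[k] (zeroStr b) = oneStr b → 2 ^ b - 1 ≤ k := by
    intro k hk
    by_contra hlt
    have h1 : f^[k + 1] (zeroStr b) = oneStr b := by
      rw [Function.iterate_succ_apply', hk, hf.1]
    have := iterate_injOn hf (x₁ := k) (x₂ := k + 1) (by simp; omega) (by simp; omega)
      (hk.trans h1.symm)
    omega
  refine ⟨lower k, fun h => ?_⟩
  obtain ⟨j, hj, hj1⟩ := exists_iterate hf (zeroStr_ne_oneStr hb).symm
  have := lower j hj1
  obtain ⟨m, rfl⟩ := Nat.exists_eq_add_of_le' (hj.trans h)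
  rw [Function.iterate_add_apply, hj1]
  exact Function.iterate_fixed hf.1 m

theorem hammDist_eq_zero {n : ℕ} {x y : Fin n → Bool} : hammDist x y = 0 ↔ x = y := by
  simp [hammDist, Finset.filter_eq_empty_iff, funext_iff]

/-- One flip increases the distance to any fixed string by at most one. The flip is 1-indexed
through `m`, and is the identity when `m` addresses no coordinate. -/
theorem hammDist_flip_le {n : ℕ} (x y : Fin n → Bool) (m : ℕ) :
    hammDist x (fun i => if (i : ℕ) + 1 = m then !(y i) else y i) ≤ hammDist x y + 1 := by
  unfold hammDist
  by_cases h : ∃ i : Fin n, (i : ℕ) + 1 = m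
  · obtain ⟨i, rfl⟩ := h
    refine le_trans (Finset.card_le_card ?_) (Finset.card_insert_le i _)
    intro j hj
    by_cases hji : j = i
    · simp [hji]
    · have : (j : ℕ) ≠ i := fun h => hji (Fin.ext h)
      simp_all
  · push Not at h
    simp [h]

/-- Flipping a wrong bit decreases the distance by exactly one. -/
theorem hammDist_flip_wrong {n : ℕ} (y z : Fin n → Bool) (i : Fin n) (hi : y i ≠ z i) :
    hammDist (fun j => if (j : ℕ) + 1 = (i : ℕ) + 1 then !(y j) else y j) z + 1
      = hammDist y z := by
  unfold hammDist
  have hmem : i ∈ Finset.univ.filter fun j => y j ≠ z j := by simpa using hi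
  rw [← Finset.card_erase_add_one hmem]
  congr 2
  ext j
  by_cases hji : j = i
  · subst hji
    simpa using hi
  · have : (j : ℕ) ≠ i := fun h => hji (Fin.ext h)
    simp [this, hji]

/-- A trajectory from `(0_b, x)` splits its `t` steps into `k` control advances and `m` flips. -/
theorem majTraj_split (b : ℕ) (f : (Fin b → Bool) → (Fin b → Bool))
    (x : Fin (2 ^ b - 1) → Bool) (a : ℕ → Bool) (t : ℕ) :
    ∃ k m, k + m = t ∧ (majTraj b f (zeroStr b, x) a t).1 = f^[k] (zeroStr b) ∧
      hammDist x (majTraj b f (zeroStr b, x) a t).2 ≤ m := by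
  induction t with
  | zero => exact ⟨0, 0, rfl, rfl, (hammDist_eq_zero.2 rfl).le⟩
  | succ t ih =>
    obtain ⟨k, m, hkm, hc, hd⟩ := ih
    simp only [majTraj, majStep]
    split_ifs
    · exact ⟨k, m + 1, by omega, hc, (hammDist_flip_le _ _ _).trans (by omega)⟩
    · exact ⟨k + 1, m, by omega, by rw [Function.iterate_succ_apply', hc], hd⟩

theorem le_time_of_reward {b : ℕ} (hb : 1 ≤ b) {f : (Fin b → Bool) → (Fin b → Bool)}
    (hf : IsControlFunc b f) (sr x : Fin (2 ^ b - 1) → Bool) (a : ℕ → Bool) (t : ℕ)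
    (h : majTraj b f (zeroStr b, x) a t = (oneStr b, sr)) :
    2 ^ b - 1 + hammDist x sr ≤ t := by
  obtain ⟨k, m, hkm, hc, hd⟩ := majTraj_split b f x a t
  rw [h] at hc hd
  have := (iterate_eq_one_iff hb hf k).1 hc.symm
  simp only at hd
  omega

open Classical in
/-- The greedy policy: flip the addressed bit exactly when it disagrees with `sr`. -/
noncomputable def greedy {b : ℕ} (sr : Fin (2 ^ b - 1) → Bool)
    (s : (Fin b → Bool) × (Fin (2 ^ b - 1) → Bool)) : Bool :=
  decide (∃ i : Fin (2 ^ b - 1), (i : ℕ) + 1 = bitVal s.1 ∧ s.2 i ≠ sr i)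

/-- The state after `t` steps of the greedy policy from `s`. -/
noncomputable def greedyState (b : ℕ) (f : (Fin b → Bool) → (Fin b → Bool))
    (sr : Fin (2 ^ b - 1) → Bool) (s : (Fin b → Bool) × (Fin (2 ^ b - 1) → Bool)) (t : ℕ) :
    (Fin b → Bool) × (Fin (2 ^ b - 1) → Bool) :=
  (fun s => majStep b f s (greedy sr s))^[t] s

theorem greedyState_succ (b : ℕ) (f : (Fin b → Bool) → (Fin b → Bool))
    (sr : Fin (2 ^ b - 1) → Bool) (s : (Fin b → Bool) × (Fin (2 ^ b - 1) → Bool)) (t : ℕ) :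
    greedyState b f sr s (t + 1)
      = majStep b f (greedyState b f sr s t) (greedy sr (greedyState b f sr s t)) := by
  simp only [greedyState, Function.iterate_succ_apply']

theorem majTraj_greedy (b : ℕ) (f : (Fin b → Bool) → (Fin b → Bool))
    (sr : Fin (2 ^ b - 1) → Bool) (s : (Fin b → Bool) × (Fin (2 ^ b - 1) → Bool)) (t : ℕ) :
    majTraj b f s (fun t => greedy sr (greedyState b f sr s t)) t = greedyState b f sr s t := by
  induction t with
  | zero => rfl
  | succ t ih => rw [greedyState_succ, majTraj, ih]

theorem majStep_greedy_reward {b : ℕ} {f : (Fin b → Bool) → (Fin b → Bool)}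
    (hf : IsControlFunc b f) (sr : Fin (2 ^ b - 1) → Bool) :
    majStep b f (oneStr b, sr) (greedy sr (oneStr b, sr)) = (oneStr b, sr) := by
  simp [majStep, greedy, hf.1]

/-- Greedy invariant: either the reward state has been reached, or the control string is `c_k`,
all bits addressed by earlier control strings are correct, and each of the `t` steps so far was
a control advance or the repair of a wrong bit. -/
theorem greedy_invariant {b : ℕ} (hb : 1 ≤ b) {f : (Fin b → Bool) → (Fin b → Bool)}
    (hf : IsControlFunc b f) (sr x : Fin (2 ^ b - 1) → Bool) (t : ℕ) :
    greedyState b f sr (zeroStr b, x) t = (oneStr b, sr) ∨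
    ∃ k ≤ 2 ^ b - 1, (greedyState b f sr (zeroStr b, x) t).1 = f^[k] (zeroStr b) ∧
      (∀ j < k, ∀ i : Fin (2 ^ b - 1), (i : ℕ) + 1 = bitVal (f^[j] (zeroStr b)) →
        (greedyState b f sr (zeroStr b, x) t).2 i = sr i) ∧
      t + hammDist (greedyState b f sr (zeroStr b, x) t).2 sr = k + hammDist x sr := by
  induction t with
  | zero => exact Or.inr ⟨0, by omega, rfl, by simp, rfl⟩
  | succ t ih =>
    rw [greedyState_succ]
    generalize greedyState b f sr (zeroStr b, x) t = s at ih ⊢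
    rcases ih with rfl | ⟨k, hk, hc, hag, hd⟩
    · exact Or.inl (majStep_greedy_reward hf sr)
    obtain ⟨c, y⟩ := s
    simp only at hc hag hd
    by_cases hw : ∃ i : Fin (2 ^ b - 1), (i : ℕ) + 1 = bitVal c ∧ y i ≠ sr i
    · have hg : greedy sr (c, y) = true := by simpa [greedy] using hw
      obtain ⟨i, hi, hne⟩ := hw
      have hc0 : c ≠ zeroStr b := by
        rintro rfl
        rw [bitVal_zeroStr] at hi
        omega
      refine Or.inr ⟨k, hk, ?_⟩
      rw [hg]
      simp only [majStep, hc0, ne_eq, not_false_eq_true, and_self, if_true]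
      refine ⟨hc, fun j hj l hl => ?_, ?_⟩
      · -- An already correct bit is not the wrong bit being flipped.
        have hyl := hag j hj l hl
        have hli : (l : ℕ) + 1 ≠ bitVal c := by
          intro h
          have : l = i := Fin.ext (by omega)
          exact hne (this ▸ hyl)
        simp [hli, hyl]
      · have := hammDist_flip_wrong y sr i hne
        rw [← hi]
        omega
    · have hg : greedy sr (c, y) = false := by simpa [greedy] using hw
      have hag' : ∀ j < k + 1, ∀ i : Fin (2 ^ b - 1),
          (i : ℕ) + 1 = bitVal (f^[j] (zeroStr b)) → y i = sr i := by
        intro j hj i hi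
        rcases Nat.lt_succ_iff_lt_or_eq.1 hj with h | rfl
        · exact hag j h i hi
        · by_contra hne
          exact hw ⟨i, by rw [hc]; exact hi, hne⟩
      rcases hk.lt_or_eq with hlt | rfl
      · refine Or.inr ⟨k + 1, hlt, ?_⟩
        rw [hg]
        refine ⟨?_, ?_, ?_⟩
        · simp [majStep, Function.iterate_succ_apply', hc]
        · simpa [majStep] using hag'
        · simp [majStep]; omega
      · -- Every bit has been addressed by one of `c_0, …, c_n`, so no wrong bit is left.
        left
        have hy : y = sr := by
          funext i
          obtain ⟨e, he⟩ := bitVal_surj b ((i : ℕ) + 1) (by omega)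
          have he0 : e ≠ zeroStr b := by
            rintro rfl
            rw [bitVal_zeroStr] at he
            omega
          obtain ⟨j, hj, hje⟩ := exists_iterate hf he0
          exact hag' j (by omega) i (by rw [hje, he])
        rw [(iterate_eq_one_iff hb hf _).2 le_rfl] at hc
        rw [hy, hc]
        exact majStep_greedy_reward hf sr

theorem greedy_reward {b : ℕ} (hb : 1 ≤ b) {f : (Fin b → Bool) → (Fin b → Bool)}
    (hf : IsControlFunc b f) (sr x : Fin (2 ^ b - 1) → Bool) (t : ℕ)
    (ht : 2 ^ b - 1 + hammDist x sr ≤ t) :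
    greedyState b f sr (zeroStr b, x) t = (oneStr b, sr) := by
  rcases greedy_invariant hb hf sr x t with h | ⟨k, hk, hc, -, hd⟩
  · exact h
  · have hkn : 2 ^ b - 1 ≤ k := by omega
    exact Prod.ext (hc.trans ((iterate_eq_one_iff hb hf k).2 hkn))
      (hammDist_eq_zero.1 (by simp only; omega))

/-- The optimal value of the unconditioned `n`-bit majority MDP at a state with
all-zero control bits is `V*((0_b, x)) = n + 1 − d(x, s_reward)`, where `n = 2^b − 1`. -/
theorem majMDP_value (b : ℕ) (hb : 1 ≤ b)
    (f : (Fin b → Bool) → (Fin b → Bool)) (hf : IsControlFunc b f)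
    (sr : Fin (2 ^ b - 1) → Bool) (x : Fin (2 ^ b - 1) → Bool) :
    majV b f sr (zeroStr b, x) = (2 ^ b - 1) + 1 - hammDist x sr := by
  have hp : 0 < 2 ^ b := by positivity
  have hcard : (Finset.Ico (2 ^ b - 1 + hammDist x sr) (2 ^ b + (2 ^ b - 1))).card
      = (2 ^ b - 1) + 1 - hammDist x sr := by
    rw [Nat.card_Ico]
    omega
  refine IsGreatest.csSup_eq ⟨?_, ?_⟩
  · refine ⟨fun t => greedy sr (greedyState b f sr (zeroStr b, x) t), ?_⟩
    rw [← hcard]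
    congr 1
    ext t
    simp only [Finset.mem_Ico, Finset.mem_filter, Finset.mem_range]
    refine ⟨fun h => ⟨h.2, ?_⟩, fun h => ⟨le_time_of_reward hb hf sr x _ t h.2, h.1⟩⟩
    rw [majTraj_greedy]
    exact greedy_reward hb hf sr x t h.1
  · rintro v ⟨a, rfl⟩
    rw [← hcard]
    refine Finset.card_le_card fun t ht => ?_
    simp only [Finset.mem_filter, Finset.mem_range] at ht
    exact Finset.mem_Ico.2 ⟨le_time_of_reward hb hf sr x a t ht.2, ht.1⟩
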